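/- Fix M, N, s with 0 ≤ s ≤ M and N > 4M−3. Then there is a nonempty Zariski-open subset of the parameter space of pairs of s-overlapping N-element frames on ℂ^M such that for every pair (U,V) = ((α_1,…,α_N),(β_1,…,β_N)) in this subset, there is no pair (A,B) of distinct rank-one M×M Hermitian matrices satisfying α_n* A α_n = β_n* B β_n for all n = 1,…,N. -/

import Mathlib

/-!
STATEMENT 8: For 0 ≤ s ≤ M and N > 4M−3, a generic pair of s-overlapping N-element
frames on ℂ^M (generic in the real Zariski topology on the parameter space of
s-overlapping pairs) admits no pair (A,B) of distinct rank-one Hermitian matrices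
with αₙ* A αₙ = βₙ* B βₙ for all n.
-/

open Matrix

noncomputable section

/-- Realification of a pair of complex M×N matrices: real and imaginary parts of all
entries (these are the real coordinates (U,U′,V,V′) on the real points of Λ_s). -/
def realizePair {M N : ℕ}
    (p : Matrix (Fin M) (Fin N) ℂ × Matrix (Fin M) (Fin N) ℂ) :
    ((Fin M × Fin N) × Fin 2) ⊕ ((Fin M × Fin N) × Fin 2) → ℝ :=
  Sum.elim
    (fun a => if a.2 = 0 then (p.1 a.1.1 a.1.2).re else (p.1 a.1.1 a.1.2).im)
    (fun a => if a.2 = 0 then (p.2 a.1.1 a.1.2).re else (p.2 a.1.1 a.1.2).im)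

/-- A real Zariski-open subset of the space of pairs of complex M×N matrices:
the complement of the common zero locus of a family of real polynomials in the real and
imaginary parts of the entries. -/
def IsRealZariskiOpenPairC {M N : ℕ}
    (U : Set (Matrix (Fin M) (Fin N) ℂ × Matrix (Fin M) (Fin N) ℂ)) : Prop :=
  ∃ I : Set (MvPolynomial (((Fin M × Fin N) × Fin 2) ⊕ ((Fin M × Fin N) × Fin 2)) ℝ),
    U = {p | ∃ q ∈ I, MvPolynomial.eval (realizePair p) q ≠ 0}

/-- Row space of a complex matrix (= image of the associated frame map). -/
def rowSpanC {m n : ℕ} (B : Matrix (Fin m) (Fin n) ℂ) : Submodule ℂ (Fin n → ℂ) :=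
  Submodule.span ℂ (Set.range fun i => B i)

/-- The parameter space of pairs of s-overlapping N-element frames on ℂ^M: both frame
matrices have full rank M, their first s rows agree, and the intersection of the images
of the frame maps (= row spaces) has dimension exactly s. -/
def IsSOverlappingPair {M N : ℕ} (s : ℕ)
    (p : Matrix (Fin M) (Fin N) ℂ × Matrix (Fin M) (Fin N) ℂ) : Prop :=
  p.1.rank = M ∧ p.2.rank = M ∧
  (∀ i : Fin M, (i : ℕ) < s → p.1 i = p.2 i) ∧
  Module.finrank ℂ ↥(rowSpanC p.1 ⊓ rowSpanC p.2) = s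

/-!
Write `A = a x x*` and `B = b y y*`, normalised so that `x i = 1` and `y j = 1` for some `i`, `j`.
With `c = b / a`, the `n`-th condition is the real quadratic equation `|x* α_n|² = c |y* β_n|²`,
and `(x, y, c)` ranges over `4 (M - 1) + 1 = 4 M - 3 < N` real parameters. So it is enough that `N`
generic points cannot all be zeros of one nonzero member `q_x` of a polynomial family with `d < N`
real parameters. At a generic point of an incidence variety dominating the space of `N`-tuples of
points, adjoining the `d` parameters makes at most `d` of the points algebraically dependent, so
the coordinates of some point stay algebraically independent over the parameters; as `q_x` vanishes
there, all its coefficients are zero.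

The quadratic form in `(α_n, β_n)` is nonzero: since `A ≠ B` are Hermitian, there is `v` with
`v* A v ≠ v* B v`, and `(v, v)` is an admissible pair of columns for every `s`.
-/

namespace OverlappingPairs

open MvPolynomial Cardinal

universe u

section GenericAvoidance

theorem exists_algebraicIndependent_block {R : Type*} {S A : Type u} {N I : Type*} [CommRing R]
    [CommRing S] [CommRing A] [Algebra R S] [Algebra S A] [Algebra R A] [IsScalarTower R S A]
    [Nontrivial R] [NoZeroDivisors A] [FaithfulSMul R S] [FaithfulSMul S A] [Finite N] [Finite I]
    {v : N × I → A} (hv : AlgebraicIndependent R v)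
    [Algebra.IsAlgebraic (Algebra.adjoin S (Set.range v)) A]
    (hS : Algebra.trdeg R S < Nat.card N) :
    ∃ n, AlgebraicIndependent S fun i => v (n, i) := by
  have : Nontrivial S := (FaithfulSMul.algebraMap_injective R S).nontrivial
  obtain ⟨t, htv, ht⟩ := exists_isTranscendenceBasis_subset (R := S) (Set.range v)
  by_contra! hdep
  have hmiss : ∀ n, ∃ i, v (n, i) ∉ t := by
    intro n
    by_contra! hmem
    refine hdep n (ht.1.comp (fun i => ⟨v (n, i), hmem i⟩) fun i i' hii' => ?_)
    simpa using hv.injective (congrArg Subtype.val hii')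
  choose i hi using hmiss
  let missing : Set A := Set.range fun n => v (n, i n)
  have hmissing : #missing = Nat.card N := by
    have hinj : Function.Injective fun n => v (n, i n) := fun n n' hnn' =>
      congrArg Prod.fst (hv.injective hnn')
    rw [← Nat.cast_card, Nat.card_range_of_injective hinj]
  have hdisj : Disjoint missing t := by
    rw [Set.disjoint_left]
    rintro _ ⟨n, rfl⟩
    exact hi n
  have hcount : #missing + #t ≤ Algebra.trdeg R S + #t := calc
    #missing + #t = #↑(missing ∪ t) := (mk_union_of_disjoint hdisj).symm
    _ ≤ #(Set.range v) :=
      mk_le_mk_of_subset (Set.union_subset (Set.range_subset_iff.mpr fun _ => ⟨_, rfl⟩) htv)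
    _ ≤ Algebra.trdeg R A := hv.to_subtype_range.cardinalMk_le_trdeg
    _ = Algebra.trdeg R S + #t := by rw [ht.cardinalMk_eq_trdeg, trdeg_add_eq]
  have ht_finite : #t < ℵ₀ := ((Set.finite_range v).subset htv).lt_aleph0
  exact hS.not_ge (hmissing ▸ (add_le_add_iff_of_lt_aleph0 ht_finite).mp hcount)

theorem map_aeval_eq_zero_of_forall_eval₂_eq_zero {k A P N I : Type*} [CommRing k] [IsDomain k]
    [CommRing A] [IsDomain A] [Algebra k A] [Finite P] [Finite N] [Finite I]
    (hPN : Nat.card P < Nat.card N) {x : P → A} {v : N × I → A} (hv : AlgebraicIndependent k v)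
    (hxv : Algebra.adjoin k (Set.range x ∪ Set.range v) = ⊤)
    {q : MvPolynomial I (MvPolynomial P k)}
    (hq : ∀ n, eval₂ (aeval (R := k) x).toRingHom (fun i => v (n, i)) q = 0) :
    map (aeval (R := k) x).toRingHom q = 0 := by
  let S := (aeval (R := k) x).range
  have : FaithfulSMul k A := (faithfulSMul_iff_algebraMap_injective k A).mpr hv.algebraMap_injective
  have hS : Algebra.trdeg k S < Nat.card N := by
    have hle := lift_trdeg_le_of_surjective _ (aeval (R := k) x).rangeRestrict_surjective
    rw [trdeg_of_isDomain, ← Nat.cast_card, lift_natCast, lift_natCast, lift_le_nat_iff] at hle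
    exact hle.trans_lt (Nat.cast_lt.mpr hPN)
  have htop : Algebra.adjoin S (Set.range v) = ⊤ := by
    apply Subalgebra.restrictScalars_injective k
    rw [Algebra.restrictScalars_adjoin, Subalgebra.restrictScalars_top, ← hxv,
      Algebra.adjoin_union, Algebra.adjoin_union, Algebra.adjoin_eq,
      Algebra.adjoin_range_eq_range_aeval k x]
  have : Algebra.IsAlgebraic (Algebra.adjoin S (Set.range v)) A := by
    rw [htop]
    exact ⟨fun a => isAlgebraic_algebraMap (⟨a, Algebra.mem_top⟩ : (⊤ : Subalgebra S A))⟩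
  obtain ⟨n, hn⟩ := exists_algebraicIndependent_block (S := S) hv hS
  have hqS : map (aeval (R := k) x).rangeRestrict.toRingHom q = 0 := by
    apply (algebraicIndependent_iff.mp hn)
    rw [← hq n, aeval_def, eval₂_map]
    rfl
  rw [← map_zero (map (algebraMap S A)), ← hqS, MvPolynomial.map_map]
  rfl

/-- The condition `q_x(v_n) = 0` on the `n`-th of several points `v_n`, as a polynomial in the
parameters `x` and the coordinates of all points. -/
def incidencePolynomial {k P N I : Type*} [CommSemiring k] (q : MvPolynomial I (MvPolynomial P k))
    (n : N) : MvPolynomial (P ⊕ N × I) k :=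
  eval₂ (rename Sum.inl).toRingHom (fun i => X (Sum.inr (n, i))) q

theorem map_incidencePolynomial {k P N I R : Type*} [CommSemiring k] [CommSemiring R]
    (φ : MvPolynomial (P ⊕ N × I) k →+* R) (q : MvPolynomial I (MvPolynomial P k)) (n : N) :
    φ (incidencePolynomial q n) =
      eval₂ (φ.comp (rename Sum.inl).toRingHom) (fun i => φ (X (Sum.inr (n, i)))) q :=
  hom_eval₂ _ _ _ _

theorem rename_coeff_mem_of_incidencePolynomial_mem {k P N I : Type*} [CommRing k] [IsDomain k]
    [Finite P] [Finite N] [Finite I] (hPN : Nat.card P < Nat.card N)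
    {q : MvPolynomial I (MvPolynomial P k)} {p : Ideal (MvPolynomial (P ⊕ N × I) k)} [p.IsPrime]
    (hq : ∀ n, incidencePolynomial q n ∈ p)
    (hp : ∀ Q : MvPolynomial (N × I) k, rename Sum.inr Q ∈ p → Q = 0) (m : I →₀ ℕ) :
    rename Sum.inl (q.coeff m) ∈ p := by
  let π := Ideal.Quotient.mkₐ k p
  have hπ : ∀ {g}, π g = 0 ↔ g ∈ p := Ideal.Quotient.eq_zero_iff_mem
  let x : P → MvPolynomial (P ⊕ N × I) k ⧸ p := fun j => π (X (Sum.inl j))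
  let v : N × I → MvPolynomial (P ⊕ N × I) k ⧸ p := fun c => π (X (Sum.inr c))
  have haeval_x : aeval x = π.comp (rename Sum.inl) := by ext; simp [x]
  have haeval_v : aeval v = π.comp (rename Sum.inr) := by ext; simp [v]
  have haeval_xv : aeval (Sum.elim x v) = π := by ext (j | c) <;> simp [x, v]
  have hv : AlgebraicIndependent k v :=
    algebraicIndependent_iff.mpr fun Q hQ => hp Q (hπ.mp (by rwa [haeval_v] at hQ))
  have hxv : Algebra.adjoin k (Set.range x ∪ Set.range v) = ⊤ := by
    rw [← Set.Sum.elim_range, Algebra.adjoin_range_eq_range_aeval, haeval_xv]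
    exact (AlgHom.range_eq_top π).mpr (Ideal.Quotient.mkₐ_surjective k p)
  have hqv : ∀ n, eval₂ (aeval (R := k) x).toRingHom (fun i => v (n, i)) q = 0 := by
    intro n
    rw [haeval_x, ← hπ.mpr (hq n)]
    exact (map_incidencePolynomial π.toRingHom q n).symm
  have hmap := map_aeval_eq_zero_of_forall_eval₂_eq_zero hPN hv hxv hqv
  rw [← hπ, ← AlgHom.comp_apply, ← haeval_x]
  exact (coeff_map _ q m).symm.trans (by rw [hmap, coeff_zero])

theorem exists_pow_mul_mem_span_incidencePolynomial {k P N I : Type*} [CommRing k] [IsDomain k]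
    [Finite P] [Finite N] [Finite I] (hPN : Nat.card P < Nat.card N)
    (q : MvPolynomial I (MvPolynomial P k)) (m : I →₀ ℕ) :
    ∃ (a : ℕ) (Q : MvPolynomial (N × I) k), Q ≠ 0 ∧
      rename Sum.inl (q.coeff m) ^ a * rename Sum.inr Q ∈
        Ideal.span (Set.range (incidencePolynomial (N := N) q)) := by
  let J := Ideal.span (Set.range (incidencePolynomial (N := N) q))
  let D : Submonoid (MvPolynomial (P ⊕ N × I) k) :=
    Submonoid.powers (rename Sum.inl (q.coeff m)) ⊔
      (nonZeroDivisors (MvPolynomial (N × I) k)).map (rename Sum.inr)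
  suffices hmeet : ¬ Disjoint (J : Set (MvPolynomial (P ⊕ N × I) k)) D by
    obtain ⟨g, hgJ, hgD⟩ := Set.not_disjoint_iff.mp hmeet
    obtain ⟨_, ⟨a, rfl⟩, _, ⟨Q, hQ, rfl⟩, rfl⟩ := Submonoid.mem_sup.mp hgD
    exact ⟨a, Q, nonZeroDivisors.ne_zero hQ, hgJ⟩
  intro hdisj
  obtain ⟨p, hp, hJp, hpD⟩ := Ideal.exists_le_prime_disjoint J D hdisj
  have hpQ : ∀ Q : MvPolynomial (N × I) k, rename Sum.inr Q ∈ p → Q = 0 := by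
    intro Q hQ
    by_contra hQ0
    exact Set.disjoint_left.mp hpD hQ
      (Submonoid.mem_sup_right ⟨Q, mem_nonZeroDivisors_of_ne_zero hQ0, rfl⟩)
  have hcoeff := rename_coeff_mem_of_incidencePolynomial_mem hPN
    (fun n => hJp (Ideal.subset_span ⟨n, rfl⟩)) hpQ m
  exact Set.disjoint_left.mp hpD hcoeff (Submonoid.mem_sup_left (Submonoid.mem_powers _))

theorem exists_eval_eq_zero_of_eval_coeff_ne_zero {k P N I : Type*} [CommRing k] [IsDomain k]
    [Finite P] [Finite N] [Finite I] (hPN : Nat.card P < Nat.card N)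
    (q : MvPolynomial I (MvPolynomial P k)) (m : I →₀ ℕ) :
    ∃ Q : MvPolynomial (N × I) k, Q ≠ 0 ∧ ∀ (x : P → k) (v : N × I → k),
      eval x (q.coeff m) ≠ 0 → (∀ n, eval (fun i => v (n, i)) (map (eval x) q) = 0) →
        eval v Q = 0 := by
  obtain ⟨a, Q, hQ, hmem⟩ := exists_pow_mul_mem_span_incidencePolynomial (N := N) hPN q m
  refine ⟨Q, hQ, fun x v hx hv => ?_⟩
  have hker : Ideal.span (Set.range (incidencePolynomial q)) ≤
      RingHom.ker (eval (Sum.elim x v)) := by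
    rw [Ideal.span_le]
    rintro _ ⟨n, rfl⟩
    have hcomp : (eval (Sum.elim x v)).comp (rename Sum.inl).toRingHom = eval x := by
      ext <;> simp
    simp only [SetLike.mem_coe, RingHom.mem_ker, map_incidencePolynomial, hcomp, eval_X,
      Sum.elim_inr, ← hv n, eval_map]
  have hzero : eval x (q.coeff m) ^ a * eval v Q = 0 := by
    simpa only [RingHom.mem_ker, map_mul, map_pow, eval_rename, Sum.elim_comp_inl,
      Sum.elim_comp_inr] using hker hmem
  exact (mul_eq_zero.mp hzero).resolve_left (pow_ne_zero a hx)

theorem exists_eval_eq_zero_of_map_eval_ne_zero {k P N I : Type*} [CommRing k] [IsDomain k]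
    [Finite P] [Finite N] [Finite I] (hPN : Nat.card P < Nat.card N)
    (q : MvPolynomial I (MvPolynomial P k)) :
    ∃ Q : MvPolynomial (N × I) k, Q ≠ 0 ∧ ∀ (x : P → k) (v : N × I → k),
      map (eval x) q ≠ 0 → (∀ n, eval (fun i => v (n, i)) (map (eval x) q) = 0) →
        eval v Q = 0 := by
  choose Q hQ hQ0 using exists_eval_eq_zero_of_eval_coeff_ne_zero (N := N) hPN q
  refine ⟨∏ m ∈ q.support, Q m, Finset.prod_ne_zero_iff.mpr fun m _ => hQ m, fun x v hx hv => ?_⟩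
  obtain ⟨m, hm⟩ := exists_coeff_ne_zero hx
  rw [coeff_map] at hm
  have hmem : m ∈ q.support := mem_support_iff.mpr fun h0 => hm (by rw [h0, map_zero])
  rw [map_prod]
  exact Finset.prod_eq_zero hmem (hQ0 m x v hm hv)

end GenericAvoidance

section RankOne

theorem exists_eq_vecMulVec_of_rank_le_one {K m n : Type*} [Field K] [Fintype n]
    {A : Matrix m n K} (hA : A.rank ≤ 1) : ∃ u w, A = vecMulVec u w := by
  classical
  obtain ⟨u, hu⟩ := finrank_le_one_iff.mp hA
  choose w hw using fun j => hu (A.mulVecLin.rangeRestrict (Pi.single j 1))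
  refine ⟨u, w, ?_⟩
  ext i j
  have hcol := congrFun (congrArg Subtype.val (hw j)) i
  simpa [vecMulVec_apply, mul_comm, eq_comm] using hcol

theorem exists_smul_vecMulVec_star_of_isHermitian {𝕜 m : Type*} [RCLike 𝕜] [Fintype m]
    {A : Matrix m m 𝕜} (hA : A.IsHermitian) (hrank : A.rank = 1) :
    ∃ (i : m) (x : m → 𝕜) (a : ℝ), x i = 1 ∧ a ≠ 0 ∧ A = (a : 𝕜) • vecMulVec x (star x) := by
  obtain ⟨u, w, huw⟩ := exists_eq_vecMulVec_of_rank_le_one hrank.le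
  have hentry : ∀ k l, A k l = u k * w l := fun k l => by rw [huw, vecMulVec_apply]
  obtain ⟨k, l, hkl⟩ : ∃ k l, A k l ≠ 0 := by
    by_contra! hzero
    have : A = 0 := Matrix.ext hzero
    simp [this] at hrank
  have hlk : A l k ≠ 0 := by
    rw [← hA.apply k l] at hkl
    exact star_ne_zero.mp hkl
  have hkk : A k k ≠ 0 := by
    rw [hentry] at hkl hlk ⊢
    exact mul_ne_zero (left_ne_zero_of_mul hkl) (right_ne_zero_of_mul hlk)
  refine ⟨k, fun p => A p k / A k k, RCLike.re (A k k), div_self hkk, fun hre => hkk ?_, ?_⟩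
  · rw [← hA.coe_re_apply_self, hre, RCLike.ofReal_zero]
  · ext p q
    have hstar : star (A q k / A k k) = A k q / A k k := by
      rw [star_div₀, hA.apply, hA.apply]
    rw [hA.coe_re_apply_self, Matrix.smul_apply, vecMulVec_apply, Pi.star_apply, hstar, smul_eq_mul]
    field_simp
    simp only [hentry]
    ring

theorem star_dotProduct_smul_vecMulVec_star_mulVec {m : Type*} [Fintype m] (a : ℝ) (x v : m → ℂ) :
    star v ⬝ᵥ (((a : ℂ) • vecMulVec x (star x)) *ᵥ v) = ((a * ‖star x ⬝ᵥ v‖ ^ 2 : ℝ) : ℂ) := by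
  have hconj : star v ⬝ᵥ x = star (star x ⬝ᵥ v) := star_dotProduct v x
  rw [smul_mulVec, dotProduct_smul, vecMulVec_mulVec, dotProduct_smul, hconj, op_smul_eq_mul,
    smul_eq_mul, Complex.ofReal_mul, Complex.ofReal_pow, ← Complex.conj_mul']
  rfl

theorem exists_star_dotProduct_mulVec_ne {m : Type*} [Fintype m]
    {A B : Matrix m m ℂ} (hAB : A ≠ B) :
    ∃ v, star v ⬝ᵥ (A *ᵥ v) ≠ star v ⬝ᵥ (B *ᵥ v) := by
  classical
  by_contra! hEq
  refine hAB (toEuclideanLin.injective ((ext_inner_map _ _).mp fun v => ?_))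
  have hinner : ∀ C : Matrix m m ℂ,
      inner ℂ (toEuclideanLin C v) v = star (star v.ofLp ⬝ᵥ (C *ᵥ v.ofLp)) := fun C => by
    rw [EuclideanSpace.inner_eq_star_dotProduct, dotProduct_star, dotProduct_comm]
    rfl
  rw [hinner, hinner, hEq]

end RankOne

section PencilForm

/-- Real coordinates of a complex number, indexed by `Fin 2`. -/
def reIm (z : ℂ) : Fin 2 → ℝ := ![z.re, z.im]

/-- The polynomial expression for `|x* u|²` in the real coordinates of `x` and `u`. -/
def normSqStarDot {R m : Type*} [CommRing R] [Fintype m] (x u : m → Fin 2 → R) : R :=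
  (∑ k, (x k 0 * u k 0 + x k 1 * u k 1)) ^ 2 + (∑ k, (x k 0 * u k 1 - x k 1 * u k 0)) ^ 2

theorem map_normSqStarDot {R S m : Type*} [CommRing R] [CommRing S] [Fintype m] (φ : R →+* S)
    (x u : m → Fin 2 → R) :
    φ (normSqStarDot x u) = normSqStarDot (fun k a => φ (x k a)) (fun k a => φ (u k a)) := by
  simp only [normSqStarDot, map_add, map_pow, map_sum, map_sub, map_mul]

theorem normSqStarDot_reIm {m : Type*} [Fintype m] (x u : m → ℂ) :
    normSqStarDot (fun k => reIm (x k)) (fun k => reIm (u k)) = ‖star x ⬝ᵥ u‖ ^ 2 := by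
  rw [← Complex.normSq_eq_norm_sq, Complex.normSq_apply]
  simp [normSqStarDot, reIm, dotProduct, sq, sub_eq_add_neg]

/-- The vector with `i`-th entry `1` and remaining entries `t`, in real coordinates. -/
def affineChart {R m : Type*} [Zero R] [One R] [DecidableEq m] (i : m)
    (t : {k // k ≠ i} × Fin 2 → R) (k : m) (a : Fin 2) : R :=
  if h : k = i then ![1, 0] a else t (⟨k, h⟩, a)

theorem map_affineChart {R S m : Type*} [Semiring R] [Semiring S] [DecidableEq m] (φ : R →+* S)
    (i : m) (t : {k // k ≠ i} × Fin 2 → R) (k : m) (a : Fin 2) :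
    φ (affineChart i t k a) = affineChart i (fun c => φ (t c)) k a := by
  unfold affineChart
  split_ifs
  · fin_cases a <;> simp
  · rfl

theorem affineChart_reIm {m : Type*} [DecidableEq m] {i : m} {x : m → ℂ} (hx : x i = 1) :
    affineChart i (fun c => reIm (x c.1) c.2) = fun k => reIm (x k) := by
  ext k a
  by_cases h : k = i
  · subst h
    fin_cases a <;> simp [affineChart, reIm, hx]
  · simp [affineChart, h]

/-- Index set of the real parameters of a pair of rank-one matrices `a • x x*`, `b • y y*` with
`x i = y j = 1`: the ratio `b / a` and the other entries of `x` and `y`. -/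
abbrev PencilParameter {m : Type*} (i j : m) : Type _ :=
  Option (({k // k ≠ i} × Fin 2) ⊕ ({k // k ≠ j} × Fin 2))

theorem card_pencilParameter {m : Type*} [Fintype m] (i j : m) :
    Nat.card (PencilParameter i j) + 3 = 4 * Fintype.card m := by
  classical
  have hpos : 0 < Fintype.card m := Fintype.card_pos_iff.mpr ⟨i⟩
  simp only [Nat.card_eq_fintype_card, Fintype.card_option, Fintype.card_sum, Fintype.card_prod,
    Fintype.card_fin, Fintype.card_subtype_compl, Fintype.card_subtype_eq]
  omega

/-- The parameters of the pair of rank-one matrices `x x*`, `c • y y*`. -/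
def pencilParameters {m : Type*} (i j : m) (x y : m → ℂ) (c : ℝ) : PencilParameter i j → ℝ :=
  fun o => o.elim c (Sum.elim (fun d => reIm (x d.1) d.2) (fun d => reIm (y d.1) d.2))

/-- The quadratic form `γ ↦ |x* (γ ∘ f)|² - c |y* (γ ∘ g)|²` in the real coordinates of `γ`,
whose coefficients are polynomials in the parameters `x`, `y`, `c`. -/
def pencilForm {m ι : Type*} [Fintype m] [DecidableEq m] (f g : m → ι) (i j : m) :
    MvPolynomial (ι × Fin 2) (MvPolynomial (PencilParameter i j) ℝ) :=
  let x : m → Fin 2 → MvPolynomial (PencilParameter i j) ℝ :=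
    affineChart i fun d => X (some (Sum.inl d))
  let y : m → Fin 2 → MvPolynomial (PencilParameter i j) ℝ :=
    affineChart j fun d => X (some (Sum.inr d))
  normSqStarDot (fun k a => C (x k a)) (fun k a => X (f k, a)) -
    C (X none) * normSqStarDot (fun k a => C (y k a)) (fun k a => X (g k, a))

theorem eval_map_pencilForm {m ι : Type*} [Fintype m] [DecidableEq m] (f g : m → ι) {i j : m}
    {x y : m → ℂ} (hx : x i = 1) (hy : y j = 1) (c : ℝ) (γ : ι → ℂ) :
    eval (fun d => reIm (γ d.1) d.2)
        (map (eval (pencilParameters i j x y c)) (pencilForm f g i j)) =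
      ‖star x ⬝ᵥ fun k => γ (f k)‖ ^ 2 - c * ‖star y ⬝ᵥ fun k => γ (g k)‖ ^ 2 := by
  simp only [pencilForm, map_sub, map_mul, map_normSqStarDot, map_affineChart, map_C, map_X,
    eval_C, eval_X, pencilParameters, Option.elim, Sum.elim_inl, Sum.elim_inr,
    affineChart_reIm hx, affineChart_reIm hy, ← normSqStarDot_reIm]

end PencilForm

section SharedRows

/-- Real coordinates of a complex matrix, with the column index first. -/
def entryReIm {ι N : Type*} (Γ : Matrix ι N ℂ) (d : N × ι × Fin 2) : ℝ :=
  reIm (Γ d.2.1 d.1) d.2.2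

theorem exists_eval_eq_zero_of_pencil {m ι N : Type*} [Fintype m] [Finite ι] [Finite N]
    (hN : 4 * Fintype.card m < Nat.card N + 3) (f g : m → ι) (i j : m) :
    ∃ Q : MvPolynomial (N × ι × Fin 2) ℝ, Q ≠ 0 ∧
      ∀ (Γ : Matrix ι N ℂ) (x y : m → ℂ) (c : ℝ), x i = 1 → y j = 1 →
        (∃ γ : ι → ℂ, ‖star x ⬝ᵥ fun k => γ (f k)‖ ^ 2 ≠ c * ‖star y ⬝ᵥ fun k => γ (g k)‖ ^ 2) →
        (∀ n, ‖star x ⬝ᵥ fun k => Γ (f k) n‖ ^ 2 = c * ‖star y ⬝ᵥ fun k => Γ (g k) n‖ ^ 2) →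
          eval (entryReIm Γ) Q = 0 := by
  classical
  have hcard : Nat.card (PencilParameter i j) < Nat.card N := by
    have := card_pencilParameter i j
    omega
  obtain ⟨Q, hQ, hvanish⟩ := exists_eval_eq_zero_of_map_eval_ne_zero hcard (pencilForm f g i j)
  refine ⟨Q, hQ, fun Γ x y c hx hy hne hΓ => hvanish (pencilParameters i j x y c) _ ?_ fun n => ?_⟩
  · obtain ⟨γ, hγ⟩ := hne
    intro hzero
    have hform := eval_map_pencilForm f g hx hy c γ
    rw [hzero, map_zero] at hform
    exact hγ (sub_eq_zero.mp hform.symm)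
  · exact (eval_map_pencilForm f g hx hy c fun r => Γ r n).trans (sub_eq_zero.mpr (hΓ n))

theorem exists_eval_eq_zero_of_isHermitian_pair {m ι N : Type*} [Fintype m] [Finite ι] [Finite N]
    (hN : 4 * Fintype.card m < Nat.card N + 3) {f g : m → ι} {r : ι → m}
    (hf : Function.LeftInverse r f) (hg : Function.LeftInverse r g) :
    ∃ Q : MvPolynomial (N × ι × Fin 2) ℝ, Q ≠ 0 ∧
      ∀ (Γ : Matrix ι N ℂ) (A B : Matrix m m ℂ), A.IsHermitian → B.IsHermitian →
        A.rank = 1 → B.rank = 1 → A ≠ B →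
        (∀ n, star (fun k => Γ (f k) n) ⬝ᵥ (A *ᵥ fun k => Γ (f k) n) =
          star (fun k => Γ (g k) n) ⬝ᵥ (B *ᵥ fun k => Γ (g k) n)) →
          eval (entryReIm Γ) Q = 0 := by
  classical
  choose Q hQ hvanish using exists_eval_eq_zero_of_pencil (N := N) hN f g
  refine ⟨∏ i, ∏ j, Q i j, Finset.prod_ne_zero_iff.mpr fun i _ =>
    Finset.prod_ne_zero_iff.mpr fun j _ => hQ i j, fun Γ A B hA hB hA1 hB1 hAB hΓ => ?_⟩
  obtain ⟨v, hv⟩ := exists_star_dotProduct_mulVec_ne hAB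
  obtain ⟨i, x, a, hx, ha, rfl⟩ := exists_smul_vecMulVec_star_of_isHermitian hA hA1
  obtain ⟨j, y, b, hy, -, rfl⟩ := exists_smul_vecMulVec_star_of_isHermitian hB hB1
  have hnorm : ∀ u w : m → ℂ,
      star u ⬝ᵥ (((a : ℂ) • vecMulVec x (star x)) *ᵥ u) =
          star w ⬝ᵥ (((b : ℂ) • vecMulVec y (star y)) *ᵥ w) ↔
        ‖star x ⬝ᵥ u‖ ^ 2 = b / a * ‖star y ⬝ᵥ w‖ ^ 2 := by
    intro u w
    rw [star_dotProduct_smul_vecMulVec_star_mulVec, star_dotProduct_smul_vecMulVec_star_mulVec,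
      Complex.ofReal_inj, div_mul_eq_mul_div, eq_div_iff ha, mul_comm a]
  have hzero : eval (entryReIm Γ) (Q i j) = 0 := by
    refine hvanish i j Γ x y (b / a) hx hy ⟨fun k => v (r k), ?_⟩ fun n => (hnorm _ _).mp (hΓ n)
    simpa only [hf _, hg _] using mt (hnorm v v).mpr hv
  simp only [map_prod]
  exact Finset.prod_eq_zero (Finset.mem_univ i) (Finset.prod_eq_zero (Finset.mem_univ j) hzero)

end SharedRows

section GenericMatrix

theorem exists_mem_eval_ne_zero_of_isOpen {𝕜 σ : Type*} [NontriviallyNormedField 𝕜] [Finite σ]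
    {U : Set (σ → 𝕜)} (hU : IsOpen U) (hne : U.Nonempty) {Q : MvPolynomial σ 𝕜} (hQ : Q ≠ 0) :
    ∃ w ∈ U, eval w Q ≠ 0 := by
  obtain ⟨w₀, hw₀⟩ := hne
  obtain ⟨u, hu, huU⟩ := isOpen_pi_iff'.mp hU w₀ hw₀
  by_contra! hzero
  refine hQ (funext_set u (fun c => infinite_of_mem_nhds _ ((hu c).1.mem_nhds (hu c).2)) ?_)
  intro w hw
  rw [hzero w (huU hw), map_zero]

theorem exists_linearIndependent_row_eval_ne_zero {ι N : Type*} [Fintype ι] [Fintype N]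
    (hιN : Fintype.card ι ≤ Fintype.card N) {Q : MvPolynomial (N × ι × Fin 2) ℝ} (hQ : Q ≠ 0) :
    ∃ Γ : Matrix ι N ℂ, LinearIndependent ℂ Γ.row ∧ eval (entryReIm Γ) Q ≠ 0 := by
  let toMatrix : (N × ι × Fin 2 → ℝ) → Matrix ι N ℂ :=
    fun w => of fun r n => w (n, r, 0) + w (n, r, 1) * Complex.I
  have hcont : Continuous toMatrix := by fun_prop
  have htoMatrix : ∀ Γ, toMatrix (entryReIm Γ) = Γ := by
    intro Γ
    ext r n
    exact Complex.re_add_im (Γ r n)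
  have hentry : ∀ w, entryReIm (toMatrix w) = w := by
    intro w
    ext ⟨n, r, a⟩
    fin_cases a <;> simp [entryReIm, reIm, toMatrix]
  have hopen : IsOpen {w | LinearIndependent ℂ (toMatrix w).row} :=
    isOpen_setOfPred_linearIndependent.preimage hcont
  have hne : {w | LinearIndependent ℂ (toMatrix w).row}.Nonempty := by
    classical
    obtain ⟨e⟩ := Function.Embedding.nonempty_of_card_le hιN
    let Γ₀ : Matrix ι N ℂ := of fun r => Pi.basisFun ℂ N (e r)
    refine ⟨entryReIm Γ₀, ?_⟩
    rw [Set.mem_ofPred_eq, htoMatrix]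
    exact (Pi.basisFun ℂ N).linearIndependent.comp e e.injective
  obtain ⟨w, hw, hwQ⟩ := exists_mem_eval_ne_zero_of_isOpen hopen hne hQ
  exact ⟨toMatrix w, hw, by rwa [hentry]⟩

end GenericMatrix

section StackedMatrix

/-- Row indices of a pair of `M`-row matrices whose first `s` rows agree: the rows of the first
matrix, followed by the rows of the second with index at least `s`. -/
abbrev OverlapRow (M s : ℕ) : Type := Fin M ⊕ {k : Fin M // s ≤ (k : ℕ)}

theorem card_overlapRow {M s : ℕ} (hs : s ≤ M) : Fintype.card (OverlapRow M s) + s = 2 * M := by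
  have hcompl : Fintype.card {k : Fin M // (k : ℕ) < s} = s := by
    simp [Fintype.card_subtype, Fin.card_filter_val_lt, hs]
  have := Fintype.card_subtype_compl fun k : Fin M => (k : ℕ) < s
  simp only [not_lt, hcompl, Fintype.card_fin] at this
  rw [Fintype.card_sum, Fintype.card_fin, this]
  omega

/-- The position in the stacked matrix of the `k`-th row of the second matrix. -/
def secondRow {M : ℕ} (s : ℕ) (k : Fin M) : OverlapRow M s :=
  if h : s ≤ (k : ℕ) then Sum.inr ⟨k, h⟩ else Sum.inl k

theorem leftInverse_secondRow {M s : ℕ} :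
    Function.LeftInverse (Sum.elim id Subtype.val) (secondRow (M := M) s) := by
  intro k
  unfold secondRow
  split_ifs <;> rfl

/-- The matrix collecting the rows of a pair of matrices, the first `s` rows being taken from the
first matrix only. -/
def stackedMatrix {M N : ℕ} (s : ℕ)
    (p : Matrix (Fin M) (Fin N) ℂ × Matrix (Fin M) (Fin N) ℂ) :
    Matrix (OverlapRow M s) (Fin N) ℂ :=
  fromRows p.1 (p.2.submatrix Subtype.val id)

theorem stackedMatrix_secondRow {M N s : ℕ}
    {p : Matrix (Fin M) (Fin N) ℂ × Matrix (Fin M) (Fin N) ℂ}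
    (hp : ∀ k : Fin M, (k : ℕ) < s → p.1 k = p.2 k) (k : Fin M) :
    stackedMatrix s p (secondRow s k) = p.2 k := by
  unfold secondRow
  split_ifs with h
  · rfl
  · exact hp k (not_le.mp h)

/-- The pair of matrices with agreeing first `s` rows determined by its stacked matrix. -/
def pairOfStacked {M N s : ℕ} (Γ : Matrix (OverlapRow M s) (Fin N) ℂ) :
    Matrix (Fin M) (Fin N) ℂ × Matrix (Fin M) (Fin N) ℂ :=
  (Γ.submatrix Sum.inl id, Γ.submatrix (secondRow s) id)

theorem stackedMatrix_pairOfStacked {M N s : ℕ} (Γ : Matrix (OverlapRow M s) (Fin N) ℂ) :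
    stackedMatrix s (pairOfStacked Γ) = Γ := by
  ext (k | k) n
  · rfl
  · simp [stackedMatrix, pairOfStacked, secondRow, k.2]

theorem rowSpanC_sup_rowSpanC_pairOfStacked {M N s : ℕ}
    (Γ : Matrix (OverlapRow M s) (Fin N) ℂ) :
    rowSpanC (pairOfStacked Γ).1 ⊔ rowSpanC (pairOfStacked Γ).2 =
      Submodule.span ℂ (Set.range Γ.row) := by
  unfold rowSpanC
  rw [← Submodule.span_union]
  congr 1
  ext v
  constructor
  · rintro (⟨k, rfl⟩ | ⟨k, rfl⟩) <;> exact ⟨_, rfl⟩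
  · rintro ⟨k | k, rfl⟩
    · exact Or.inl ⟨k, rfl⟩
    · refine Or.inr ⟨k, ?_⟩
      ext n
      simp [pairOfStacked, secondRow, k.2]

theorem isSOverlappingPair_pairOfStacked {M N s : ℕ} (hs : s ≤ M)
    {Γ : Matrix (OverlapRow M s) (Fin N) ℂ} (hΓ : LinearIndependent ℂ Γ.row) :
    IsSOverlappingPair s (pairOfStacked Γ) := by
  have hfirst : LinearIndependent ℂ (pairOfStacked Γ).1.row := hΓ.comp _ Sum.inl_injective
  have hsecond : LinearIndependent ℂ (pairOfStacked Γ).2.row :=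
    hΓ.comp _ leftInverse_secondRow.injective
  refine ⟨by simpa using hfirst.rank_matrix, by simpa using hsecond.rank_matrix,
    fun k hk => ?_, ?_⟩
  · ext n
    simp [pairOfStacked, secondRow, not_le.mpr hk]
  · have hdim := Submodule.finrank_sup_add_finrank_inf_eq
      (rowSpanC (pairOfStacked Γ).1) (rowSpanC (pairOfStacked Γ).2)
    have hdim₁ : Module.finrank ℂ (rowSpanC (pairOfStacked Γ).1) = M :=
      (finrank_span_eq_card hfirst).trans (Fintype.card_fin M)
    have hdim₂ : Module.finrank ℂ (rowSpanC (pairOfStacked Γ).2) = M :=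
      (finrank_span_eq_card hsecond).trans (Fintype.card_fin M)
    rw [rowSpanC_sup_rowSpanC_pairOfStacked, finrank_span_eq_card hΓ, hdim₁, hdim₂] at hdim
    have := card_overlapRow hs
    omega

/-- The coordinate of `realizePair` holding a given coordinate of the stacked matrix. -/
def stackedCoord {M N s : ℕ} :
    Fin N × OverlapRow M s × Fin 2 → ((Fin M × Fin N) × Fin 2) ⊕ ((Fin M × Fin N) × Fin 2)
  | (n, Sum.inl k, a) => Sum.inl ((k, n), a)
  | (n, Sum.inr k, a) => Sum.inr ((k, n), a)

theorem realizePair_comp_stackedCoord {M N : ℕ} (s : ℕ)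
    (p : Matrix (Fin M) (Fin N) ℂ × Matrix (Fin M) (Fin N) ℂ) :
    realizePair p ∘ stackedCoord = entryReIm (stackedMatrix s p) := by
  ext ⟨n, k | k, a⟩ <;> fin_cases a <;> rfl

theorem isRealZariskiOpenPairC_eval_stackedMatrix_ne_zero {M N s : ℕ}
    (Q : MvPolynomial (Fin N × OverlapRow M s × Fin 2) ℝ) :
    IsRealZariskiOpenPairC {p : Matrix (Fin M) (Fin N) ℂ × Matrix (Fin M) (Fin N) ℂ |
      eval (entryReIm (stackedMatrix s p)) Q ≠ 0} := by
  refine ⟨{rename stackedCoord Q}, ?_⟩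
  simp only [Set.mem_singleton_iff, exists_eq_left, eval_rename, realizePair_comp_stackedCoord]

end StackedMatrix

end OverlappingPairs

open OverlappingPairs

/-- If N > 4M−3 then for a generic pair of s-overlapping frames
(U,V) = ((α₁,…,α_N),(β₁,…,β_N)) on ℂ^M (columns of the frame matrices), there is no pair
of distinct rank-one Hermitian matrices (A,B) with αₙ* A αₙ = βₙ* B βₙ for all n. -/
theorem generic_overlapping_pairs_complex (M N s : ℕ) (hs : s ≤ M)
    (h : (N : ℤ) > 4 * (M : ℤ) - 3) :
    ∃ W : Set (Matrix (Fin M) (Fin N) ℂ × Matrix (Fin M) (Fin N) ℂ),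
      IsRealZariskiOpenPairC W ∧ (∃ p ∈ W, IsSOverlappingPair s p) ∧
      ∀ p ∈ W, IsSOverlappingPair s p →
        ¬ ∃ A B : Matrix (Fin M) (Fin M) ℂ,
            A.IsHermitian ∧ B.IsHermitian ∧ A.rank = 1 ∧ B.rank = 1 ∧ A ≠ B ∧
            ∀ n : Fin N,
              star (fun i => p.1 i n) ⬝ᵥ (A *ᵥ fun i => p.1 i n) =
              star (fun i => p.2 i n) ⬝ᵥ (B *ᵥ fun i => p.2 i n) := by
  have hcard : 4 * Fintype.card (Fin M) < Nat.card (Fin N) + 3 := by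
    rw [Fintype.card_fin, Nat.card_fin]
    omega
  have hrow : Fintype.card (OverlapRow M s) ≤ Fintype.card (Fin N) := by
    have := card_overlapRow hs
    rw [Fintype.card_fin N]
    omega
  obtain ⟨Q, hQ, hvanish⟩ := exists_eval_eq_zero_of_isHermitian_pair hcard
    (f := Sum.inl) (fun _ => rfl) (leftInverse_secondRow (s := s))
  refine ⟨_, isRealZariskiOpenPairC_eval_stackedMatrix_ne_zero Q, ?_, ?_⟩
  · obtain ⟨Γ, hΓ, hΓQ⟩ := exists_linearIndependent_row_eval_ne_zero hrow hQ
    refine ⟨pairOfStacked Γ, ?_, isSOverlappingPair_pairOfStacked hs hΓ⟩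
    rwa [Set.mem_ofPred_eq, stackedMatrix_pairOfStacked]
  · rintro p hpW ⟨-, -, hrows, -⟩ ⟨A, B, hA, hB, hA1, hB1, hAB, hcol⟩
    refine hpW (hvanish _ A B hA hB hA1 hB1 hAB fun n => ?_)
    simp only [stackedMatrix_secondRow hrows]
    exact hcol n
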